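/- For all integers n, m with 0 < m < n and every continuous function f on [−1,1], the VP interpolation error satisfies E_{n+m−1}(f)_∞ ≤ ‖f − V_n^m f‖_∞ ≤ (1 + (1+4π)·c_∞)·E_{n−m}(f)_∞, where V_n^m f(x) = Σ_{k=1}^{n} f(x_k^n) Φ_{n,k}^m(x), E_N(f)_∞ = inf{‖f−P‖_∞ : P a polynomial of degree ≤ N}, ‖·‖_∞ is the sup norm on [−1,1], and c_∞ = max_{|x|≤1} ∫_{−1}^{1} |v_n^m(x,y)| w(y) dy. -/

import Mathlib

open Real MeasureTheory Finset

/-- Chebyshev nodes of the first kind: `x_k^n = cos((2k-1)π/(2n))`. -/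
noncomputable def chebNode (n k : ℕ) : ℝ :=
  Real.cos ((2 * (k : ℝ) - 1) * Real.pi / (2 * (n : ℝ)))

/-- Orthonormal Chebyshev polynomials of the first kind. -/
noncomputable def chebP (r : ℕ) (x : ℝ) : ℝ :=
  if r = 0 then Real.sqrt (1 / Real.pi)
  else Real.sqrt (2 / Real.pi) * Real.cos ((r : ℝ) * Real.arccos x)

/-- Darboux kernel `K_r(x,y) = Σ_{s=0}^r p_s(x) p_s(y)`. -/
noncomputable def darboux (r : ℕ) (x y : ℝ) : ℝ :=
  ∑ s ∈ Finset.range (r + 1), chebP s x * chebP s y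

/-- de la Vallée Poussin kernel `v_n^m(x,y) = (1/(2m)) Σ_{r=n-m}^{n+m-1} K_r(x,y)`. -/
noncomputable def vpK (n m : ℕ) (x y : ℝ) : ℝ :=
  (1 / (2 * (m : ℝ))) * ∑ r ∈ Finset.Icc (n - m) (n + m - 1), darboux r x y

/-- The Chebyshev weight `w(x) = 1/√(1-x²)`. -/
noncomputable def chebW (x : ℝ) : ℝ := 1 / Real.sqrt (1 - x ^ 2)

/-- Scaling functions `Φ_{n,k}^m(x) = (π/n) v_n^m(x_k^n, x)`. -/
noncomputable def scal (n m k : ℕ) (x : ℝ) : ℝ :=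
  (Real.pi / (n : ℝ)) * vpK n m (chebNode n k) x

/-- The nodes `y_k^n`, `k = 1,…,2n`: the Chebyshev nodes of order `3n` not of order `n`. -/
noncomputable def yNode (n k : ℕ) : ℝ := chebNode (3 * n) (3 * k / 2)

/-- Wavelet functions `ψ_{n,k}^m`. -/
noncomputable def wav (n m k : ℕ) (x : ℝ) : ℝ :=
  (Real.pi / (3 * (n : ℝ))) * vpK (3 * n) m (yNode n k) x -
    ∑ h ∈ Finset.Icc 1 n,
      scal n m h (yNode n k) * ((Real.pi / (3 * (n : ℝ))) * vpK (3 * n) m (chebNode n h) x)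

/-- Filter coefficients `μ_{n,r}^m`. -/
noncomputable def muC (n m r : ℕ) : ℝ :=
  if r ≤ n - m then 1
  else if r < n + m then ((m : ℝ) + (n : ℝ) - (r : ℝ)) / (2 * (m : ℝ))
  else 0

/-- Squared norms `ν_{n,r}^m` of the orthogonal scaling basis. -/
noncomputable def nuC (n m r : ℕ) : ℝ :=
  if r ≤ n - m then 1 else ((m : ℝ) ^ 2 + ((n : ℝ) - (r : ℝ)) ^ 2) / (2 * (m : ℝ) ^ 2)

/-- Orthogonal scaling basis `Φ_{n,r}^⊥`. -/
noncomputable def scalPerp (n m r : ℕ) (x : ℝ) : ℝ :=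
  if r ≤ n - m then chebP r x
  else muC n m r * chebP r x - muC n m (2 * n - r) * chebP (2 * n - r) x

/-- The sup norm on `[-1,1]`. -/
noncomputable def supNorm (f : ℝ → ℝ) : ℝ := ⨆ x : Set.Icc (-1 : ℝ) 1, |f x|

/-- The Lebesgue constant `c_∞ = max_{|x|≤1} ∫_{-1}^1 |v_n^m(x,y)| w(y) dy`. -/
noncomputable def cInf (n m : ℕ) : ℝ :=
  ⨆ x : Set.Icc (-1 : ℝ) 1, ∫ y in (-1 : ℝ)..1, |vpK n m x y| * chebW y


/-- Error of best uniform approximation by polynomials of degree at most `N`. -/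
noncomputable def bestApprox (N : ℕ) (f : ℝ → ℝ) : ℝ :=
  sInf {a : ℝ | ∃ P : Polynomial ℝ,
    P.degree ≤ (N : WithBot ℕ) ∧ a = supNorm (fun x => f x - P.eval x)}


/-- The Chebyshev measure. -/
noncomputable abbrev muT : Measure ℝ := Polynomial.Chebyshev.measureT

/-- normalisation -/
noncomputable def cf (r : ℕ) : ℝ := if r = 0 then √(1 / π) else √(2 / π)

/-- orthonormal Chebyshev polynomial as a polynomial -/
noncomputable def qP (r : ℕ) : Polynomial ℝ := Polynomial.C (cf r) * Polynomial.Chebyshev.T ℝ (r : ℤ)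

lemma chebP_cos (r : ℕ) (x : ℝ) : chebP r x = cf r * Real.cos (r * Real.arccos x) := by
  unfold chebP cf
  split_ifs with h
  · simp [h]
  · rfl

lemma qP_eval (r : ℕ) {x : ℝ} (hx : x ∈ Set.Icc (-1 : ℝ) 1) : (qP r).eval x = chebP r x := by
  rw [chebP_cos]
  conv_lhs => rw [← Real.cos_arccos hx.1 hx.2]
  simp [qP, Polynomial.Chebyshev.T_real_cos]

lemma chebP_cont (r : ℕ) : Continuous (chebP r) := by
  have : chebP r = fun x => cf r * Real.cos (r * Real.arccos x) := funext (chebP_cos r)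
  rw [this]
  have := Real.continuous_arccos
  fun_prop

lemma cf_sq (r : ℕ) : cf r * cf r = if r = 0 then 1 / π else 2 / π := by
  unfold cf
  have := Real.pi_pos
  split_ifs <;> exact Real.mul_self_sqrt (by positivity)

lemma cf_nonneg (r : ℕ) : 0 ≤ cf r := by
  unfold cf; split_ifs <;> positivity

lemma integral_muT_congr {f g : ℝ → ℝ} (h : ∀ x ∈ Set.Icc (-1 : ℝ) 1, f x = g x) :
    ∫ x, f x ∂muT = ∫ x, g x ∂muT := by
  rw [Polynomial.Chebyshev.integral_measureT_eq_integral_cos,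
    Polynomial.Chebyshev.integral_measureT_eq_integral_cos]
  congr 1
  ext θ
  exact h _ ⟨Real.neg_one_le_cos θ, Real.cos_le_one θ⟩

lemma muT_int {f : ℝ → ℝ} (h : Continuous f) : Integrable f muT :=
  Polynomial.Chebyshev.integrable_measureT h.continuousOn

lemma muT_w (f : ℝ → ℝ) : ∫ y in (-1 : ℝ)..1, f y * chebW y = ∫ y, f y ∂muT := by
  rw [Polynomial.Chebyshev.integral_measureT]
  simp [chebW, Real.sqrt_inv]

lemma orth_poly (i j : ℕ) : ∫ x, (qP i * qP j).eval x ∂muT = if i = j then 1 else 0 := by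
  have h1 : ∀ x, (qP i * qP j).eval x = (cf i * cf j) *
      ((Polynomial.Chebyshev.T ℝ (i : ℤ)).eval x * (Polynomial.Chebyshev.T ℝ (j : ℤ)).eval x) := by
    intro x; simp [qP]; ring
  simp_rw [h1]
  rw [integral_const_mul]
  have hpi := Real.pi_ne_zero
  split_ifs with h
  · subst h
    rw [cf_sq]
    split_ifs with h0
    · subst h0
      have := Polynomial.Chebyshev.integral_eval_T_real_mul_self_measureT_zero
      push_cast
      rw [this]; field_simp
    · rw [Polynomial.Chebyshev.integral_T_real_mul_self_measureT_of_ne_zero h0]; field_simp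
  · rw [Polynomial.Chebyshev.integral_eval_T_real_mul_eval_T_real_measureT_of_ne h, mul_zero]

lemma orth (i j : ℕ) : ∫ x, chebP i x * chebP j x ∂muT = if i = j then 1 else 0 := by
  rw [← orth_poly]
  apply integral_muT_congr
  intro x hx
  rw [Polynomial.eval_mul, qP_eval i hx, qP_eval j hx]

lemma chebNode_mem (n k : ℕ) : chebNode n k ∈ Set.Icc (-1 : ℝ) 1 :=
  ⟨Real.neg_one_le_cos _, Real.cos_le_one _⟩

lemma sum_nodes (n : ℕ) (g : ℝ → ℝ) : ∑ k ∈ Finset.Icc 1 n, g (chebNode n k) =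
    ∑ i ∈ Finset.range n, g (Real.cos ((2 * i + 1) / (2 * n) * π)) := by
  rw [← Finset.Ico_add_one_right_eq_Icc, Finset.sum_Ico_eq_sum_range]
  apply Finset.sum_congr (by simp)
  intro i _
  unfold chebNode
  congr 2
  push_cast
  ring

lemma sum_nodes_poly (n : ℕ) (P : Polynomial ℝ) :
    (π / n) * ∑ k ∈ Finset.Icc 1 n, P.eval (chebNode n k) =
    Polynomial.Chebyshev.sumZeroes n P := by
  rw [sum_nodes n (fun x => P.eval x)]; rfl

lemma qP_degree (r : ℕ) : (qP r).degree ≤ r := by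
  unfold qP
  refine (Polynomial.degree_mul_le _ _).trans ?_
  rw [Polynomial.Chebyshev.degree_T]
  calc _ ≤ (0 : WithBot ℕ) + ((r : ℤ).natAbs : WithBot ℕ) := by
        gcongr
        exact Polynomial.degree_C_le
    _ = _ := by simp

lemma disc_orth {n i j : ℕ} (hn : n ≠ 0) (h : i + j < 2 * n) :
    (π / n) * ∑ k ∈ Finset.Icc 1 n, chebP i (chebNode n k) * chebP j (chebNode n k) =
      if i = j then 1 else 0 := by
  rw [← orth_poly, Polynomial.Chebyshev.integral_eq_sumZeroes hn, ← sum_nodes_poly]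
  · congr 1
    apply Finset.sum_congr rfl
    intro k _
    rw [Polynomial.eval_mul, qP_eval i (chebNode_mem n k), qP_eval j (chebNode_mem n k)]
  · refine (Polynomial.degree_mul_le _ _).trans_lt ((add_le_add (qP_degree i) (qP_degree j)).trans_lt ?_)
    exact_mod_cast h

lemma sum_single {n s : ℕ} (h : ¬ (2 * n) ∣ s) :
    (π / n) * ∑ k ∈ Finset.Icc 1 n, chebP s (chebNode n k) = 0 := by
  have h1 : ∑ k ∈ Finset.Icc 1 n, chebP s (chebNode n k) =
      cf s * ∑ k ∈ Finset.Icc 1 n, (Polynomial.Chebyshev.T ℝ (s : ℤ)).eval (chebNode n k) := by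
    rw [Finset.mul_sum]
    apply Finset.sum_congr rfl
    intro k _
    rw [← qP_eval s (chebNode_mem n k)]; simp [qP]
  rw [h1, mul_left_comm, sum_nodes_poly, Polynomial.Chebyshev.sumZeroes_T_of_not_dvd, mul_zero]
  exact_mod_cast h

lemma poly_repr (N : ℕ) (P : Polynomial ℝ) (hP : P.degree ≤ (N : WithBot ℕ)) :
    ∃ c : ℕ → ℝ, ∀ x ∈ Set.Icc (-1 : ℝ) 1, P.eval x = ∑ i ∈ Finset.range (N + 1), c i * chebP i x := by
  have hmem : P ∈ Polynomial.degreeLT ℝ (N + 1) := by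
    rw [Polynomial.mem_degreeLT]
    exact lt_of_le_of_lt hP (by exact_mod_cast Nat.lt_succ_self N)
  rw [← Polynomial.Sequence.span_degreeLT (Polynomial.Chebyshev.chebyshevTsequence ℝ) (by simp),
    show Set.Iio (N + 1) = Finset.range (N + 1) by simp,
    Submodule.mem_span_image_finset_iff_exists_fun'] at hmem
  obtain ⟨c, rfl⟩ := hmem
  refine ⟨fun i => c i / cf i, fun x hx => ?_⟩
  rw [Polynomial.eval_finsetSum]
  apply Finset.sum_congr rfl
  intro i _
  have : cf i ≠ 0 := by
    intro h0
    have h2 := cf_sq i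
    have := Real.pi_pos
    rw [h0] at h2
    split_ifs at h2 <;> · field_simp at h2; norm_num at h2
  rw [← qP_eval i hx]
  simp [qP, Polynomial.Chebyshev.chebyshevTsequence]
  field_simp

lemma abs_chebP_mul (s : ℕ) (x y : ℝ) : |chebP s x * chebP s y| ≤ 2 / π := by
  have hp := Real.pi_pos
  rw [chebP_cos, chebP_cos, show cf s * Real.cos (s * Real.arccos x) * (cf s * Real.cos (s * Real.arccos y))
    = (cf s * cf s) * (Real.cos (s * Real.arccos x) * Real.cos (s * Real.arccos y)) by ring,
    abs_mul, abs_mul (Real.cos _), abs_of_nonneg (mul_self_nonneg _)]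
  have h1 : cf s * cf s ≤ 2 / π := by
    rw [cf_sq]; split_ifs
    · gcongr; norm_num
    · rfl
  have h2 : |Real.cos (s * Real.arccos x)| * |Real.cos (s * Real.arccos y)| ≤ 1 :=
    mul_le_one₀ (Real.abs_cos_le_one _) (abs_nonneg _) (Real.abs_cos_le_one _)
  calc _ ≤ 2 / π * 1 := by gcongr
    _ = _ := mul_one _

lemma darboux_symm (r : ℕ) (x y : ℝ) : darboux r x y = darboux r y x := by
  unfold darboux
  exact Finset.sum_congr rfl fun _ _ => mul_comm _ _

lemma vpK_symm (n m : ℕ) (x y : ℝ) : vpK n m x y = vpK n m y x := by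
  unfold vpK
  congr 1
  exact Finset.sum_congr rfl fun _ _ => darboux_symm _ _ _

lemma darboux_cont (r : ℕ) (x : ℝ) : Continuous (fun y => darboux r x y) := by
  unfold darboux
  have := chebP_cont
  fun_prop

lemma vpK_cont (n m : ℕ) (x : ℝ) : Continuous (fun y => vpK n m x y) := by
  unfold vpK
  have := darboux_cont
  fun_prop

lemma disc_repr {n i r : ℕ} (hn : n ≠ 0) (hir : i ≤ r) (h : i + r < 2 * n) (x : ℝ) :
    (π / n) * ∑ k ∈ Finset.Icc 1 n, chebP i (chebNode n k) * darboux r (chebNode n k) x =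
      chebP i x := by
  unfold darboux
  simp_rw [Finset.mul_sum]
  rw [Finset.sum_comm]
  have : ∀ s ∈ Finset.range (r + 1), ∑ k ∈ Finset.Icc 1 n, π / n *
      (chebP i (chebNode n k) * (chebP s (chebNode n k) * chebP s x)) =
      if i = s then chebP s x else 0 := by
    intro s hs
    have h2 := disc_orth (n := n) (i := i) (j := s) hn (by simp at hs; omega)
    have h3 : (if i = s then chebP s x else 0) = (if i = s then 1 else 0) * chebP s x := by simp
    rw [h3, ← h2, mul_assoc, Finset.sum_mul, Finset.mul_sum]
    exact Finset.sum_congr rfl fun _ _ => by ring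
  rw [Finset.sum_congr rfl this, Finset.sum_ite_eq, if_pos (by simp; omega)]

lemma cont_repr {i r : ℕ} (hir : i ≤ r) (x : ℝ) :
    ∫ y, chebP i y * darboux r x y ∂muT = chebP i x := by
  unfold darboux
  simp_rw [Finset.mul_sum]
  have hc := chebP_cont
  rw [integral_finsetSum _ (fun s _ => muT_int (by fun_prop))]
  have : ∀ s ∈ Finset.range (r + 1), ∫ y, chebP i y * (chebP s x * chebP s y) ∂muT =
      if i = s then chebP s x else 0 := by
    intro s _
    have : ∀ y, chebP i y * (chebP s x * chebP s y) = chebP s x * (chebP i y * chebP s y) := by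
      intro y; ring
    simp_rw [this]
    rw [integral_const_mul, orth]; simp
  rw [Finset.sum_congr rfl this, Finset.sum_ite_eq, if_pos (by simp; omega)]

lemma cont_repr_darboux {q r : ℕ} (hir : q ≤ r) (x x' : ℝ) :
    ∫ y, darboux q x y * darboux r x' y ∂muT = darboux q x x' := by
  have hc := chebP_cont
  have hd := darboux_cont
  conv_lhs => enter [2, y]; rw [darboux, Finset.sum_mul]
  rw [integral_finsetSum _ (fun s _ => muT_int (by fun_prop))]
  conv_rhs => rw [darboux]
  apply Finset.sum_congr rfl
  intro s hs
  simp_rw [mul_assoc]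
  rw [integral_const_mul, cont_repr (by simp at hs; omega)]

lemma cont_repr_vpK {n m r : ℕ} (hir : n + m - 1 ≤ r) (x x' : ℝ) :
    ∫ y, vpK n m x y * darboux r x' y ∂muT = vpK n m x x' := by
  have hd := darboux_cont
  conv_lhs => enter [2, y]; rw [vpK, mul_assoc, Finset.sum_mul]
  rw [integral_const_mul, integral_finsetSum _ (fun s _ => muT_int (by fun_prop))]
  conv_rhs => rw [vpK]
  congr 1
  apply Finset.sum_congr rfl
  intro s hs
  rw [cont_repr_darboux (by simp at hs; omega)]

/-- Dirichlet kernel -/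
noncomputable def dirK (r : ℕ) (t : ℝ) : ℝ := 1 + 2 * ∑ s ∈ Finset.range r, Real.cos ((s + 1 : ℕ) * t)

lemma fejer_sq (L : ℕ) (t : ℝ) : ∑ r ∈ Finset.range L, dirK r t =
    (∑ a ∈ Finset.range L, Real.cos (a * t)) ^ 2 + (∑ a ∈ Finset.range L, Real.sin (a * t)) ^ 2 := by
  induction L with
  | zero => simp
  | succ L ih =>
    rw [Finset.sum_range_succ, ih, Finset.sum_range_succ, Finset.sum_range_succ]
    have h1 : ∑ s ∈ Finset.range L, Real.cos ((s + 1 : ℕ) * t) =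
        Real.cos (L * t) * ∑ a ∈ Finset.range L, Real.cos (a * t) +
        Real.sin (L * t) * ∑ a ∈ Finset.range L, Real.sin (a * t) := by
      rw [← Finset.sum_range_reflect, Finset.mul_sum, Finset.mul_sum, ← Finset.sum_add_distrib]
      apply Finset.sum_congr rfl
      intro a ha
      rw [← Real.cos_sub, ← sub_mul]
      have : L - 1 - a + 1 = L - a := by simp at ha; omega
      rw [this, Nat.cast_sub (by simp at ha; omega)]
    have h2 := Real.sin_sq_add_cos_sq (L * t)
    unfold dirK
    rw [h1]
    linear_combination -h2

lemma darboux_dir (r : ℕ) (x y : ℝ) : darboux r x y = 1 / (2 * π) *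
    (dirK r (Real.arccos x - Real.arccos y) + dirK r (Real.arccos x + Real.arccos y)) := by
  have hp := Real.pi_ne_zero
  unfold darboux dirK
  rw [Finset.sum_range_succ']
  have h0 : chebP 0 x * chebP 0 y = 1 / π := by
    have := cf_sq 0
    simp only [if_true] at this
    simp [chebP_cos, this]
  have h1 : ∀ s ∈ Finset.range r, chebP (s + 1) x * chebP (s + 1) y =
      1 / π * (Real.cos ((s + 1 : ℕ) * (Real.arccos x - Real.arccos y)) +
       Real.cos ((s + 1 : ℕ) * (Real.arccos x + Real.arccos y))) := by
    intro s _
    have := cf_sq (s + 1)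
    simp only [Nat.succ_ne_zero, if_false] at this
    rw [mul_sub, mul_add (((s + 1 : ℕ)) : ℝ), Real.cos_sub, Real.cos_add, chebP_cos, chebP_cos]
    linear_combination (Real.cos ((s + 1 : ℕ) * Real.arccos x) * Real.cos ((s + 1 : ℕ) * Real.arccos y)) * this
  rw [h0, Finset.sum_congr rfl h1, ← Finset.mul_sum, Finset.sum_add_distrib]
  generalize ∑ s ∈ Finset.range r, Real.cos ((s + 1 : ℕ) * (Real.arccos x - Real.arccos y)) = A
  generalize ∑ s ∈ Finset.range r, Real.cos ((s + 1 : ℕ) * (Real.arccos x + Real.arccos y)) = B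
  field_simp
  ring

lemma fejer_nonneg (L : ℕ) (x y : ℝ) : 0 ≤ ∑ r ∈ Finset.range L, darboux r x y := by
  simp_rw [darboux_dir]
  rw [← Finset.mul_sum, Finset.sum_add_distrib, fejer_sq, fejer_sq]
  have := Real.pi_pos
  positivity

lemma sum_darboux_le {n r : ℕ} (hn : 0 < n) (hr : r < 4 * n) (y : ℝ) :
    (π / n) * ∑ k ∈ Finset.Icc 1 n, darboux r (chebNode n k) y ≤ if r < 2 * n then 1 else 3 := by
  have hp := Real.pi_pos
  have hn' : (0 : ℝ) < n := by exact_mod_cast hn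
  unfold darboux
  rw [Finset.sum_comm, Finset.mul_sum]
  have key : ∀ s ∈ Finset.range (r + 1),
      π / n * ∑ k ∈ Finset.Icc 1 n, chebP s (chebNode n k) * chebP s y ≤
      (if s = 0 then 1 else 0) + (if s = 2 * n then 2 else 0) := by
    intro s hs
    by_cases h0 : s = 0
    · subst h0
      have := cf_sq 0
      simp only [if_true] at this
      rw [if_pos rfl, if_neg (by omega)]
      simp [chebP_cos, this]
      field_simp
      rfl
    by_cases h1 : s = 2 * n
    · rw [if_neg h0, if_pos h1, zero_add]
      calc _ ≤ π / n * ∑ k ∈ Finset.Icc 1 n, 2 / π := by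
            gcongr with k _
            exact (le_abs_self _).trans (abs_chebP_mul _ _ _)
        _ = 2 := by simp; field_simp
        _ ≤ _ := le_rfl
    · rw [if_neg h0, if_neg h1, ← Finset.sum_mul, ← mul_assoc, sum_single]
      · simp
      · rintro ⟨q, hq⟩
        simp at hs
        have : q < 2 := by
          by_contra hh
          have : 2 * n * 2 ≤ 2 * n * q := Nat.mul_le_mul_left _ (by omega)
          omega
        interval_cases q <;> omega
  refine (Finset.sum_le_sum key).trans ?_
  rw [Finset.sum_add_distrib, Finset.sum_ite_eq', Finset.sum_ite_eq']
  simp only [Finset.mem_range]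
  split_ifs <;> first | omega | norm_num

lemma sum_fejer_le_two {n : ℕ} (hn : 0 < n) (y : ℝ) :
    (π / n) * ∑ k ∈ Finset.Icc 1 n, ∑ r ∈ Finset.range (2 * n), darboux r (chebNode n k) y ≤ 2 * n := by
  rw [Finset.sum_comm, Finset.mul_sum]
  refine (Finset.sum_le_sum (g := fun _ => (1 : ℝ)) fun r hr => ?_).trans (by simp)
  rw [Finset.mem_range] at hr
  have := sum_darboux_le hn (by omega : r < 4 * n) y
  rwa [if_pos hr] at this

lemma sum_fejer_le_four {n : ℕ} (hn : 0 < n) (y : ℝ) :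
    (π / n) * ∑ k ∈ Finset.Icc 1 n, ∑ r ∈ Finset.range (4 * n), darboux r (chebNode n k) y ≤ 12 * n := by
  rw [Finset.sum_comm, Finset.mul_sum]
  refine (Finset.sum_le_sum (g := fun _ => (3 : ℝ)) fun r hr => ?_).trans (by simp; linarith)
  rw [Finset.mem_range] at hr
  have := sum_darboux_le hn hr y
  split_ifs at this <;> linarith

lemma repr_W {n m : ℕ} (hmn : m < n) (x x' : ℝ) :
    vpK n m x x' = ∫ y, vpK n m x y * ((1 / (2 * n)) *
      (∑ r ∈ Finset.range (4 * n), darboux r x' y - ∑ r ∈ Finset.range (2 * n), darboux r x' y)) ∂muT := by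
  have hd := darboux_cont
  have hv := vpK_cont
  have hn' : (0 : ℝ) < n := by exact_mod_cast (by omega : 0 < n)
  have h1 : ∀ y, vpK n m x y * ((1 / (2 * n)) *
      (∑ r ∈ Finset.range (4 * n), darboux r x' y - ∑ r ∈ Finset.range (2 * n), darboux r x' y)) =
      (1 / (2 * n)) * ∑ r ∈ Finset.Ico (2 * n) (4 * n), vpK n m x y * darboux r x' y := by
    intro y
    rw [← Finset.mul_sum, Finset.sum_Ico_eq_sub _ (by omega)]
    ring
  simp_rw [h1]
  rw [integral_const_mul, integral_finsetSum _ (fun s _ => muT_int (by fun_prop))]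
  rw [Finset.sum_congr rfl (g := fun _ => vpK n m x x')
    (fun r hr => cont_repr_vpK (by simp at hr; omega) x x')]
  rw [Finset.sum_const, Nat.card_Ico, nsmul_eq_mul, Nat.cast_sub (by omega)]
  push_cast
  field_simp
  ring

lemma marc {n m : ℕ} (hmn : m < n) (x : ℝ) :
    (π / n) * ∑ k ∈ Finset.Icc 1 n, |vpK n m x (chebNode n k)| ≤ 7 * ∫ y, |vpK n m x y| ∂muT := by
  have hd := darboux_cont
  have hv := vpK_cont
  have hp := Real.pi_pos
  have hn0 : 0 < n := by omega
  have hn' : (0 : ℝ) < n := by exact_mod_cast hn0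
  have h1 : ∀ k ∈ Finset.Icc 1 n, |vpK n m x (chebNode n k)| ≤
      ∫ y, |vpK n m x y| * ((1 / (2 * n)) *
      (∑ r ∈ Finset.range (4 * n), darboux r (chebNode n k) y +
        ∑ r ∈ Finset.range (2 * n), darboux r (chebNode n k) y)) ∂muT := by
    intro k _
    rw [repr_W hmn x (chebNode n k)]
    refine (abs_integral_le_integral_abs).trans ?_
    apply integral_mono (muT_int (by fun_prop)) (muT_int (by fun_prop))
    intro y
    have a4 := fejer_nonneg (4 * n) (chebNode n k) y
    have a2 := fejer_nonneg (2 * n) (chebNode n k) y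
    simp only [abs_mul]
    rw [abs_of_nonneg (by positivity : (0 : ℝ) ≤ 1 / (2 * n))]
    gcongr
    rw [abs_le]; constructor <;> linarith
  calc _ ≤ (π / n) * ∑ k ∈ Finset.Icc 1 n, ∫ y, |vpK n m x y| * ((1 / (2 * n)) *
      (∑ r ∈ Finset.range (4 * n), darboux r (chebNode n k) y +
        ∑ r ∈ Finset.range (2 * n), darboux r (chebNode n k) y)) ∂muT := by
        gcongr with k hk
        exact h1 k hk
    _ = ∫ y, (π / n) * ∑ k ∈ Finset.Icc 1 n, |vpK n m x y| * ((1 / (2 * n)) *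
      (∑ r ∈ Finset.range (4 * n), darboux r (chebNode n k) y +
        ∑ r ∈ Finset.range (2 * n), darboux r (chebNode n k) y)) ∂muT := by
        rw [integral_const_mul, integral_finsetSum _ (fun s _ => muT_int (by fun_prop))]
    _ ≤ ∫ y, 7 * |vpK n m x y| ∂muT := by
        apply integral_mono (muT_int (by fun_prop)) (muT_int (by fun_prop))
        intro y
        have a4 := sum_fejer_le_four hn0 y
        have a2 := sum_fejer_le_two hn0 y
        simp only
        rw [← Finset.mul_sum, ← Finset.mul_sum, Finset.sum_add_distrib]
        calc _ = |vpK n m x y| * (1 / (2 * n)) * (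
            (π / n) * ∑ k ∈ Finset.Icc 1 n, ∑ r ∈ Finset.range (4 * n), darboux r (chebNode n k) y +
            (π / n) * ∑ k ∈ Finset.Icc 1 n, ∑ r ∈ Finset.range (2 * n), darboux r (chebNode n k) y) := by
              ring
          _ ≤ |vpK n m x y| * (1 / (2 * n)) * (12 * n + 2 * n) := by gcongr
          _ = _ := by field_simp; ring
    _ = _ := integral_const_mul _ _

lemma abs_vpK_le (n m : ℕ) : ∃ M, ∀ x y, |vpK n m x y| ≤ M := by
  refine ⟨(1 / (2 * (m : ℝ))) * ∑ r ∈ Finset.Icc (n - m) (n + m - 1), ∑ s ∈ Finset.range (r + 1), 2 / π,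
    fun x y => ?_⟩
  unfold vpK darboux
  rw [abs_mul, abs_of_nonneg (by positivity : (0 : ℝ) ≤ 1 / (2 * m))]
  gcongr
  refine (Finset.abs_sum_le_sum_abs _ _).trans (Finset.sum_le_sum fun r _ => ?_)
  exact (Finset.abs_sum_le_sum_abs _ _).trans (Finset.sum_le_sum fun s _ => abs_chebP_mul _ _ _)

lemma cInf_eq (n m : ℕ) : cInf n m = ⨆ x : Set.Icc (-1 : ℝ) 1, ∫ y, |vpK n m x y| ∂muT := by
  unfold cInf
  congr 1
  ext x
  exact muT_w _

lemma cInf_nonneg (n m : ℕ) : 0 ≤ cInf n m := by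
  rw [cInf_eq]
  exact Real.iSup_nonneg fun x => integral_nonneg fun y => abs_nonneg _

lemma le_cInf (n m : ℕ) {x : ℝ} (hx : x ∈ Set.Icc (-1 : ℝ) 1) :
    ∫ y, |vpK n m x y| ∂muT ≤ cInf n m := by
  rw [cInf_eq]
  obtain ⟨M, hM⟩ := abs_vpK_le n m
  refine le_ciSup (f := fun x : Set.Icc (-1 : ℝ) 1 => ∫ y, |vpK n m x y| ∂muT) ?_ ⟨x, hx⟩
  refine ⟨∫ y, M ∂muT, ?_⟩
  rintro _ ⟨z, rfl⟩
  exact integral_mono (muT_int (vpK_cont n m z).abs) (muT_int continuous_const) (fun y => hM _ _)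

lemma lebesgue {n m : ℕ} (hmn : m < n) {x : ℝ} (hx : x ∈ Set.Icc (-1 : ℝ) 1) :
    ∑ k ∈ Finset.Icc 1 n, |scal n m k x| ≤ (1 + 4 * π) * cInf n m := by
  have hp := Real.pi_gt_three
  have h1 : ∑ k ∈ Finset.Icc 1 n, |scal n m k x| =
      (π / n) * ∑ k ∈ Finset.Icc 1 n, |vpK n m x (chebNode n k)| := by
    rw [Finset.mul_sum]
    apply Finset.sum_congr rfl
    intro k _
    unfold scal
    rw [abs_mul, vpK_symm, abs_of_nonneg (by positivity : (0 : ℝ) ≤ π / n)]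
  rw [h1]
  refine (marc hmn x).trans ?_
  have := le_cInf n m hx
  have h0 := cInf_nonneg n m
  nlinarith

lemma vp_chebP {n m i : ℕ} (hm : 0 < m) (hmn : m < n) (hi : i ≤ n - m) (x : ℝ) :
    ∑ k ∈ Finset.Icc 1 n, chebP i (chebNode n k) * scal n m k x = chebP i x := by
  have hm' : (0 : ℝ) < m := by exact_mod_cast hm
  have h1 : ∑ k ∈ Finset.Icc 1 n, chebP i (chebNode n k) * scal n m k x =
      (1 / (2 * m)) * ∑ r ∈ Finset.Icc (n - m) (n + m - 1),
      ((π / n) * ∑ k ∈ Finset.Icc 1 n, chebP i (chebNode n k) * darboux r (chebNode n k) x) := by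
    unfold scal vpK
    simp_rw [Finset.mul_sum]
    rw [Finset.sum_comm]
    refine Finset.sum_congr rfl fun _ _ => Finset.sum_congr rfl fun _ _ => by ring
  rw [h1, Finset.sum_congr rfl (g := fun _ => chebP i x)
    (fun r hr => disc_repr (by omega) (by simp at hr; omega) (by simp at hr; omega) x)]
  rw [Finset.sum_const, Nat.card_Icc, nsmul_eq_mul,
    show n + m - 1 + 1 - (n - m) = 2 * m by omega]
  push_cast
  field_simp

lemma vp_poly {n m : ℕ} (hm : 0 < m) (hmn : m < n) (P : Polynomial ℝ)
    (hP : P.degree ≤ ((n - m : ℕ) : WithBot ℕ)) {x : ℝ} (hx : x ∈ Set.Icc (-1 : ℝ) 1) :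
    ∑ k ∈ Finset.Icc 1 n, P.eval (chebNode n k) * scal n m k x = P.eval x := by
  obtain ⟨c, hc⟩ := poly_repr _ P hP
  rw [hc x hx]
  simp_rw [fun k => hc _ (chebNode_mem n k), Finset.sum_mul]
  rw [Finset.sum_comm]
  apply Finset.sum_congr rfl
  intro i hi
  simp_rw [mul_assoc]
  rw [← Finset.mul_sum, vp_chebP hm hmn (by simp at hi; omega)]

lemma bdd_of_cont {g : ℝ → ℝ} (hg : ContinuousOn g (Set.Icc (-1 : ℝ) 1)) :
    BddAbove (Set.range fun x : Set.Icc (-1 : ℝ) 1 => |g x|) := by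
  obtain ⟨C, hC⟩ := isCompact_Icc.exists_bound_of_continuousOn hg
  refine ⟨C, ?_⟩
  rintro _ ⟨z, rfl⟩
  exact hC z z.2

lemma le_supNorm {g : ℝ → ℝ} (hg : ContinuousOn g (Set.Icc (-1 : ℝ) 1)) {x : ℝ}
    (hx : x ∈ Set.Icc (-1 : ℝ) 1) : |g x| ≤ supNorm g :=
  le_ciSup (f := fun x : Set.Icc (-1 : ℝ) 1 => |g x|) (bdd_of_cont hg) ⟨x, hx⟩

lemma supNorm_nonneg (g : ℝ → ℝ) : 0 ≤ supNorm g := Real.iSup_nonneg fun _ => abs_nonneg _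

/-- the VP interpolant as a polynomial -/
noncomputable def vpPoly (n m : ℕ) (f : ℝ → ℝ) : Polynomial ℝ :=
  ∑ k ∈ Finset.Icc 1 n, Polynomial.C (f (chebNode n k) * ((π / n) * (1 / (2 * m)))) *
    ∑ r ∈ Finset.Icc (n - m) (n + m - 1), ∑ s ∈ Finset.range (r + 1),
      Polynomial.C (chebP s (chebNode n k)) * qP s

lemma vpPoly_eval (n m : ℕ) (f : ℝ → ℝ) {x : ℝ} (hx : x ∈ Set.Icc (-1 : ℝ) 1) :
    (vpPoly n m f).eval x = ∑ k ∈ Finset.Icc 1 n, f (chebNode n k) * scal n m k x := by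
  unfold vpPoly scal vpK darboux
  simp only [Polynomial.eval_finsetSum, Polynomial.eval_mul, Polynomial.eval_C, qP_eval _ hx]
  exact Finset.sum_congr rfl fun _ _ => by ring

lemma vpPoly_degree (n m : ℕ) (f : ℝ → ℝ) :
    (vpPoly n m f).degree ≤ ((n + m - 1 : ℕ) : WithBot ℕ) := by
  rw [← Polynomial.mem_degreeLE]
  unfold vpPoly
  refine Submodule.sum_mem _ fun k _ => ?_
  rw [← Polynomial.smul_eq_C_mul]
  refine Submodule.smul_mem _ _ (Submodule.sum_mem _ fun r hr => Submodule.sum_mem _ fun s hs => ?_)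
  rw [← Polynomial.smul_eq_C_mul]
  refine Submodule.smul_mem _ _ ?_
  rw [Polynomial.mem_degreeLE]
  refine (qP_degree s).trans ?_
  simp at hr hs
  exact_mod_cast (by omega : s ≤ n + m - 1)

theorem vp_interpolation_error (n m : ℕ) (hm : 0 < m) (hmn : m < n)
    (f : ℝ → ℝ) (hf : ContinuousOn f (Set.Icc (-1 : ℝ) 1)) :
    bestApprox (n + m - 1) f ≤
        supNorm (fun x => f x - ∑ k ∈ Finset.Icc 1 n, f (chebNode n k) * scal n m k x) ∧
      supNorm (fun x => f x - ∑ k ∈ Finset.Icc 1 n, f (chebNode n k) * scal n m k x) ≤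
        (1 + (1 + 4 * Real.pi) * cInf n m) * bestApprox (n - m) f := by
  constructor
  · refine csInf_le ⟨0, ?_⟩ ⟨vpPoly n m f, vpPoly_degree n m f, ?_⟩
    · rintro _ ⟨P, _, rfl⟩
      exact supNorm_nonneg _
    · unfold supNorm
      congr 1
      ext x
      beta_reduce
      rw [vpPoly_eval n m f x.2]
  · have hK : 0 < 1 + (1 + 4 * Real.pi) * cInf n m := by
      have := cInf_nonneg n m
      have := Real.pi_pos
      positivity
    rw [← div_le_iff₀' hK]
    refine le_csInf ⟨_, 0, by simp, rfl⟩ ?_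
    rintro _ ⟨P, hP, rfl⟩
    rw [div_le_iff₀' hK]
    have : Nonempty (Set.Icc (-1 : ℝ) 1) := ⟨⟨0, by norm_num⟩⟩
    refine ciSup_le fun x => ?_
    have hg : ContinuousOn (fun x => f x - P.eval x) (Set.Icc (-1 : ℝ) 1) :=
      hf.sub P.continuous.continuousOn
    set E := supNorm (fun x => f x - P.eval x) with hE
    have hE0 : 0 ≤ E := supNorm_nonneg _
    have h1 : f x - ∑ k ∈ Finset.Icc 1 n, f (chebNode n k) * scal n m k x =
        (f x - P.eval (x : ℝ)) -
        ∑ k ∈ Finset.Icc 1 n, (f (chebNode n k) - P.eval (chebNode n k)) * scal n m k x := by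
      simp_rw [sub_mul]
      rw [Finset.sum_sub_distrib, vp_poly hm hmn P hP x.2]
      ring
    have h2 : |∑ k ∈ Finset.Icc 1 n, (f (chebNode n k) - P.eval (chebNode n k)) * scal n m k x| ≤
        E * ((1 + 4 * Real.pi) * cInf n m) := by
      calc _ ≤ ∑ k ∈ Finset.Icc 1 n, E * |scal n m k x| := by
            refine (Finset.abs_sum_le_sum_abs _ _).trans (Finset.sum_le_sum fun k _ => ?_)
            rw [abs_mul]
            gcongr
            exact le_supNorm hg (chebNode_mem n k)
        _ ≤ _ := by
            rw [← Finset.mul_sum]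
            gcongr
            exact lebesgue hmn x.2
    have h3 : |f x - P.eval (x : ℝ)| ≤ E := le_supNorm hg x.2
    beta_reduce
    rw [h1]
    refine (abs_sub _ _).trans ?_
    linarith
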